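/- Let p > 1 and let q ≤ 0 be continuous and monotone increasing on [0, x_0]. Let φ(x, ρ) solve φ' = ρ - (q(x)/ρ^{p-1}) |S_p(φ)|^p with φ(0, ρ) = 0, and set θ(x, ρ) = φ(x, ρ)/ρ. Then ∂θ/∂ρ (x_0, ρ) ≤ 0 for all ρ ≥ (-2q(0))^{1/p}. Moreover, if ∂θ/∂ρ (x_0, ρ) = 0 for some ρ ≥ (-2q(0))^{1/p}, then q ≡ 0 on (0, x_0]. -/

import Mathlib

open Set Filter Topology

theorem le_of_hasDerivAt_nonneg {f f' : ℝ → ℝ} {a b : ℝ} (hab : a ≤ b)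
    (hf : ∀ x ∈ Icc a b, HasDerivAt f (f' x) x) (hf' : ∀ x ∈ Ioo a b, 0 ≤ f' x) :
    f a ≤ f b := by
  refine monotoneOn_of_deriv_nonneg (convex_Icc a b)
    (fun x hx => (hf x hx).continuousAt.continuousWithinAt) ?_ ?_
    (left_mem_Icc.2 hab) (right_mem_Icc.2 hab) hab
  · rw [interior_Icc]
    exact fun x hx => (hf x (Ioo_subset_Icc_self hx)).differentiableAt.differentiableWithinAt
  · rw [interior_Icc]
    intro x hx
    rw [(hf x (Ioo_subset_Icc_self hx)).deriv]
    exact hf' x hx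

theorem lt_of_hasDerivAt_pos {f f' : ℝ → ℝ} {a b : ℝ} (hab : a < b)
    (hf : ∀ x ∈ Icc a b, HasDerivAt f (f' x) x) (hf' : ∀ x ∈ Ioo a b, 0 < f' x) :
    f a < f b := by
  refine strictMonoOn_of_deriv_pos (convex_Icc a b)
    (fun x hx => (hf x hx).continuousAt.continuousWithinAt) ?_
    (left_mem_Icc.2 hab.le) (right_mem_Icc.2 hab.le) hab
  rw [interior_Icc]
  intro x hx
  rw [(hf x (Ioo_subset_Icc_self hx)).deriv]
  exact hf' x hx

/-- The signed power `x ↦ |x| ^ (r - 2) * x` is continuous for `r > 1`. -/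
theorem continuous_abs_rpow_mul_self {r : ℝ} (hr : 1 < r) :
    Continuous fun x : ℝ => |x| ^ (r - 2) * x := by
  have h1 : deriv (fun x : ℝ => |x| ^ r) = fun x => r * |x| ^ (r - 2) * x :=
    funext fun x => (hasDerivAt_abs_rpow x hr).deriv
  have h2 : Continuous (deriv fun x : ℝ => |x| ^ r) := by
    have := contDiff_norm_rpow (E := ℝ) hr
    simp only [Real.norm_eq_abs] at this
    exact this.continuous_deriv le_rfl
  rw [h1] at h2
  have h3 := h2.const_mul r⁻¹
  convert h3 using 2 with x
  field_simp

/-- `S` is a generalized sine function with derivative `C`. -/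
structure IsGenSine (p : ℝ) (S C : ℝ → ℝ) : Prop where
  one_lt : 1 < p
  hasDerivAt : ∀ x, HasDerivAt S (C x) x
  ode : ∀ x, HasDerivAt (fun t => |C t| ^ (p - 2) * C t)
    (-(p - 1) * (|S x| ^ (p - 2) * S x)) x
  zero : S 0 = 0
  deriv_zero : C 0 = 1

namespace IsGenSine

variable {p : ℝ} {S C : ℝ → ℝ}

theorem continuous_sine (h : IsGenSine p S C) : Continuous S :=
  continuous_iff_continuousAt.2 fun x => (h.hasDerivAt x).continuousAt

/-- The signed powers with conjugate exponents are inverse to each other. -/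
theorem abs_rpow_mul_self_conj {p : ℝ} (hp : 1 < p) (c : ℝ) :
    |(|c| ^ (p - 2) * c)| ^ (p / (p - 1) - 2) * (|c| ^ (p - 2) * c) = c := by
  have hp1 : p - 1 ≠ 0 := by linarith
  rcases eq_or_ne c 0 with rfl | hc
  · simp
  have hc' : 0 < |c| := abs_pos.2 hc
  have h1 : |(|c| ^ (p - 2) * c)| = |c| ^ (p - 1) := by
    rw [abs_mul, abs_of_nonneg (by positivity), ← Real.rpow_add_one hc'.ne']
    ring_nf
  rw [h1, ← Real.rpow_mul hc'.le, ← mul_assoc, ← Real.rpow_add hc']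
  have : (p - 1) * (p / (p - 1) - 2) + (p - 2) = 0 := by field_simp; ring
  rw [this]; simp

theorem abs_abs_rpow_mul_self {p : ℝ} (hp : 1 < p) (c : ℝ) :
    |(|c| ^ (p - 2) * c)| ^ (p / (p - 1)) = |c| ^ p := by
  have hp1 : p - 1 ≠ 0 := by linarith
  rcases eq_or_ne c 0 with rfl | hc
  · have : p / (p - 1) ≠ 0 := div_ne_zero (by linarith) hp1
    simp [Real.zero_rpow this, Real.zero_rpow (show p ≠ 0 by linarith)]
  have hc' : 0 < |c| := abs_pos.2 hc
  have h1 : |(|c| ^ (p - 2) * c)| = |c| ^ (p - 1) := by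
    rw [abs_mul, abs_of_nonneg (by positivity), ← Real.rpow_add_one hc'.ne']
    ring_nf
  rw [h1, ← Real.rpow_mul hc'.le]
  congr 1; field_simp

theorem one_lt_conj {p : ℝ} (hp : 1 < p) : 1 < p / (p - 1) := by
  rw [lt_div_iff₀ (by linarith)]; linarith

theorem continuous_cosine (h : IsGenSine p S C) : Continuous C := by
  have h1 : Continuous fun t => |C t| ^ (p - 2) * C t :=
    continuous_iff_continuousAt.2 fun x => (h.ode x).continuousAt
  have h2 := (continuous_abs_rpow_mul_self (one_lt_conj h.one_lt)).comp h1
  simpa only [Function.comp_def, abs_rpow_mul_self_conj h.one_lt] using h2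

theorem hasDerivAt_abs_rpow_sine (h : IsGenSine p S C) (x : ℝ) :
    HasDerivAt (fun t => |S t| ^ p) (p * (|S x| ^ (p - 2) * S x) * C x) x := by
  refine ((hasDerivAt_abs_rpow (S x) h.one_lt).comp x (h.hasDerivAt x)).congr_deriv ?_
  ring

theorem hasDerivAt_abs_rpow_cosine (h : IsGenSine p S C) (x : ℝ) :
    HasDerivAt (fun t => |C t| ^ p) (-(p * (|S x| ^ (p - 2) * S x) * C x)) x := by
  have h1 := (hasDerivAt_abs_rpow (|C x| ^ (p - 2) * C x)
    (one_lt_conj h.one_lt)).comp x (h.ode x)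
  have h2 : ((fun y : ℝ => |y| ^ (p / (p - 1))) ∘ fun t => |C t| ^ (p - 2) * C t) =
      fun t => |C t| ^ p := funext fun t => abs_abs_rpow_mul_self h.one_lt (C t)
  rw [h2] at h1
  refine h1.congr_deriv ?_
  have hp1 : p - 1 ≠ 0 := by linarith [h.one_lt]
  rw [mul_assoc (p / (p - 1)), abs_rpow_mul_self_conj h.one_lt]
  field_simp

theorem abs_rpow_add_abs_rpow (h : IsGenSine p S C) (x : ℝ) : |S x| ^ p + |C x| ^ p = 1 := by
  have h1 : ∀ y, HasDerivAt (fun t => |S t| ^ p + |C t| ^ p) 0 y := fun y =>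
    ((h.hasDerivAt_abs_rpow_sine y).add (h.hasDerivAt_abs_rpow_cosine y)).congr_deriv
      (add_neg_cancel _)
  have h2 := is_const_of_deriv_eq_zero (fun y => (h1 y).differentiableAt)
    (fun y => (h1 y).deriv) x 0
  have hp : p ≠ 0 := by linarith [h.one_lt]
  simpa [h.zero, h.deriv_zero, Real.zero_rpow hp] using h2

theorem abs_rpow_sine_le_one (h : IsGenSine p S C) (x : ℝ) : |S x| ^ p ≤ 1 := by
  have := h.abs_rpow_add_abs_rpow x
  have : 0 ≤ |C x| ^ p := by positivity
  linarith

theorem abs_sine_le_one (h : IsGenSine p S C) (x : ℝ) : |S x| ≤ 1 := by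
  by_contra! hx
  exact absurd (Real.one_lt_rpow hx (by linarith [h.one_lt] : 0 < p))
    (not_lt.2 (h.abs_rpow_sine_le_one x))

theorem abs_cosine_le_one (h : IsGenSine p S C) (x : ℝ) : |C x| ≤ 1 := by
  by_contra! hx
  have := Real.one_lt_rpow hx (by linarith [h.one_lt] : 0 < p)
  have := h.abs_rpow_add_abs_rpow x
  have : 0 ≤ |S x| ^ p := by positivity
  linarith

theorem continuous_deriv_abs_rpow_sine (h : IsGenSine p S C) :
    Continuous fun x => p * (|S x| ^ (p - 2) * S x) * C x :=
  (continuous_const.mul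
    ((continuous_abs_rpow_mul_self h.one_lt).comp h.continuous_sine)).mul h.continuous_cosine

theorem abs_deriv_abs_rpow_sine_le (h : IsGenSine p S C) (x : ℝ) :
    |p * (|S x| ^ (p - 2) * S x) * C x| ≤ p := by
  have hp := h.one_lt
  have h1 : |(|S x| ^ (p - 2) * S x)| ≤ 1 := by
    rcases eq_or_ne (S x) 0 with hs | hs
    · simp [hs]
    have hs' : 0 < |S x| := abs_pos.2 hs
    rw [abs_mul, abs_of_nonneg (by positivity), ← Real.rpow_add_one hs'.ne']
    exact Real.rpow_le_one hs'.le (h.abs_sine_le_one x) (by linarith)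
  rw [abs_mul, abs_mul, abs_of_pos (by linarith : 0 < p)]
  calc p * |(|S x| ^ (p - 2) * S x)| * |C x| ≤ p * 1 * 1 := by
        gcongr
        exact h.abs_cosine_le_one x
    _ = p := by ring

theorem abs_cosine_eq_one (h : IsGenSine p S C) {N : ℝ} (hN : S N = 0) : |C N| = 1 := by
  have hp := h.one_lt
  have h1 := h.abs_rpow_add_abs_rpow N
  rw [hN, abs_zero, Real.zero_rpow (by linarith), zero_add] at h1
  rw [← Real.one_rpow p] at h1
  exact (Real.rpow_left_inj (abs_nonneg _) zero_le_one (by linarith : p ≠ 0)).1 h1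

theorem reflect (h : IsGenSine p S C) : IsGenSine p (fun s => -S (-s)) (fun s => C (-s)) where
  one_lt := h.one_lt
  hasDerivAt x := ((h.hasDerivAt (-x)).comp x (hasDerivAt_neg x)).neg.congr_deriv (by simp)
  ode x := ((h.ode (-x)).comp x (hasDerivAt_neg x)).congr_deriv (by rw [abs_neg]; ring)
  zero := by simp [h.zero]
  deriv_zero := by simp [h.deriv_zero]

theorem shift (h : IsGenSine p S C) {N : ℝ} (hN : S N = 0) :
    IsGenSine p (fun s => C N * S (N + s)) (fun s => C N * C (N + s)) where
  one_lt := h.one_lt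
  hasDerivAt x :=
    (((h.hasDerivAt (N + x)).comp x ((hasDerivAt_id x).const_add N)).const_mul (C N)).congr_deriv
      (by simp)
  ode x := by
    have h1 := ((h.ode (N + x)).comp x ((hasDerivAt_id x).const_add N)).const_mul (C N)
    have h2 : (fun t => |C N * C (N + t)| ^ (p - 2) * (C N * C (N + t))) =
        fun t => C N * (|C (N + t)| ^ (p - 2) * C (N + t)) := by
      funext t
      rw [abs_mul, h.abs_cosine_eq_one hN]; ring_nf
    rw [h2]
    refine h1.congr_deriv ?_
    rw [abs_mul, h.abs_cosine_eq_one hN]; ring_nf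
  zero := by simp [hN]
  deriv_zero := by
    have := h.abs_cosine_eq_one hN
    simp [← abs_mul_abs_self (C N), this]

/-- Two generalized sines agree as long as both are nonnegative and nondecreasing. -/
theorem eq_of_nonneg {S₁ C₁ S₂ C₂ : ℝ → ℝ} (h₁ : IsGenSine p S₁ C₁) (h₂ : IsGenSine p S₂ C₂)
    {a : ℝ} (hC₁ : ∀ x ∈ Icc 0 a, 0 ≤ C₁ x) (hC₂ : ∀ x ∈ Icc 0 a, 0 ≤ C₂ x) :
    ∀ x ∈ Icc 0 a, S₁ x = S₂ x := by
  intro x hx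
  have hp := h₁.one_lt
  have key : ∀ {S C : ℝ → ℝ}, IsGenSine p S C → (∀ x ∈ Icc 0 a, 0 ≤ C x) →
      ∀ y ∈ Icc 0 a, 0 ≤ S y := fun {S C} h hC y hy => by
    rw [← h.zero]
    exact le_of_hasDerivAt_nonneg hy.1 (fun z _ => h.hasDerivAt z)
      fun z hz => hC z ⟨hz.1.le, hz.2.le.trans hy.2⟩
  have hd : ∀ y, HasDerivAt (fun t => -(S₁ t - S₂ t) ^ 2)
      (-(2 * (S₁ y - S₂ y) * (C₁ y - C₂ y))) y := fun y =>
    (((h₁.hasDerivAt y).sub (h₂.hasDerivAt y)).pow 2).neg.congr_deriv (by simp)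
  have := le_of_hasDerivAt_nonneg hx.1 (fun z _ => hd z) fun y hy => by
    have hy' : y ∈ Icc 0 a := ⟨hy.1.le, hy.2.le.trans hx.2⟩
    have e₁ := h₁.abs_rpow_add_abs_rpow y
    have e₂ := h₂.abs_rpow_add_abs_rpow y
    have s₁ := key h₁ hC₁ y hy'
    have s₂ := key h₂ hC₂ y hy'
    have c₁ := hC₁ y hy'
    have c₂ := hC₂ y hy'
    rw [abs_of_nonneg s₁, abs_of_nonneg c₁] at e₁
    rw [abs_of_nonneg s₂, abs_of_nonneg c₂] at e₂
    have hp0 : 0 < p := by linarith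
    rcases le_total (S₁ y) (S₂ y) with hs | hs
    · have := Real.rpow_le_rpow s₁ hs hp0.le
      have : C₂ y ≤ C₁ y := (Real.rpow_le_rpow_iff c₂ c₁ hp0).1 (by linarith)
      nlinarith [mul_nonneg (sub_nonneg.2 hs) (sub_nonneg.2 this)]
    · have := Real.rpow_le_rpow s₂ hs hp0.le
      have : C₁ y ≤ C₂ y := (Real.rpow_le_rpow_iff c₁ c₂ hp0).1 (by linarith)
      nlinarith [mul_nonneg (sub_nonneg.2 hs) (sub_nonneg.2 this)]
  simp only [h₁.zero, h₂.zero, sub_self] at this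
  have h0 : (S₁ x - S₂ x) ^ 2 = 0 := le_antisymm (by linarith) (sq_nonneg _)
  exact sub_eq_zero.1 (pow_eq_zero_iff (by norm_num) |>.1 h0)

theorem cosine_eq_of_pos {S₁ C₁ S₂ C₂ : ℝ → ℝ} (h₁ : IsGenSine p S₁ C₁)
    (h₂ : IsGenSine p S₂ C₂) {a : ℝ} (hC₁ : ∀ x ∈ Icc 0 a, 0 < C₁ x) :
    ∀ x ∈ Icc 0 a, S₁ x = S₂ x ∧ C₁ x = C₂ x := by
  have hp := h₁.one_lt
  have hC₂ : ∀ x ∈ Icc 0 a, 0 < C₂ x := by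
    by_contra! hcon
    obtain ⟨x, hx, hx'⟩ := hcon
    have hK : IsCompact (Icc 0 x ∩ C₂ ⁻¹' Iic 0) :=
      isCompact_Icc.inter_right (isClosed_Iic.preimage h₂.continuous_cosine)
    obtain ⟨z, ⟨hz, hz0⟩, hzmin⟩ := hK.exists_isLeast ⟨x, right_mem_Icc.2 hx.1, hx'⟩
    have hpos : ∀ y ∈ Ico 0 z, 0 < C₂ y := fun y hy => by
      by_contra! h0
      exact absurd (hzmin ⟨⟨hy.1, hy.2.le.trans hz.2⟩, h0⟩) (not_le.2 hy.2)
    have hz1 : 0 < z := by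
      rcases hz.1.eq_or_lt with h | h
      · rw [← h] at hz0
        have := h₂.deriv_zero
        simp only [mem_preimage, mem_Iic] at hz0
        linarith
      · exact h
    have hcz : C₂ z = 0 := by
      refine le_antisymm hz0 ?_
      have hcl : z ∈ closure (Ico 0 z) := by
        rw [closure_Ico hz1.ne]; exact right_mem_Icc.2 hz1.le
      exact closure_minimal (fun y hy => (hpos y hy).le)
        (isClosed_Ici.preimage h₂.continuous_cosine) hcl
    have hnn : ∀ y ∈ Icc 0 z, 0 ≤ C₂ y := fun y hy => by
      rcases hy.2.eq_or_lt with h | h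
      · rw [h, hcz]
      · exact (hpos y ⟨hy.1, h⟩).le
    have hz2 : z ∈ Icc 0 a := ⟨hz.1, hz.2.trans hx.2⟩
    have heq := eq_of_nonneg h₁ h₂ (a := z) (fun y hy => (hC₁ y ⟨hy.1, hy.2.trans hz2.2⟩).le)
      hnn z (right_mem_Icc.2 hz.1)
    have e₁ := h₁.abs_rpow_add_abs_rpow z
    have e₂ := h₂.abs_rpow_add_abs_rpow z
    rw [hcz, abs_zero, Real.zero_rpow (by linarith), ← heq] at e₂
    have : 0 < |C₁ z| ^ p := Real.rpow_pos_of_pos (abs_pos.2 (hC₁ z hz2).ne') _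
    linarith
  intro x hx
  have hs := eq_of_nonneg h₁ h₂ (fun y hy => (hC₁ y hy).le) (fun y hy => (hC₂ y hy).le) x hx
  refine ⟨hs, ?_⟩
  have e₁ := h₁.abs_rpow_add_abs_rpow x
  have e₂ := h₂.abs_rpow_add_abs_rpow x
  rw [hs, abs_of_pos (hC₁ x hx)] at e₁
  rw [abs_of_pos (hC₂ x hx)] at e₂
  exact (Real.rpow_left_inj (hC₁ x hx).le (hC₂ x hx).le (by linarith : p ≠ 0)).1 (by linarith)

theorem exists_pos_arc (h : IsGenSine p S C) :
    ∃ η > 0, (∀ s ∈ Icc 0 η, 0 < C s) ∧ ∀ s ∈ Ioc 0 η, 0 < S s := by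
  have h1 : ∀ᶠ s in 𝓝 (0 : ℝ), 0 < C s :=
    h.continuous_cosine.continuousAt.eventually (lt_mem_nhds (by simp [h.deriv_zero]))
  obtain ⟨ε, hε, hb⟩ := Metric.eventually_nhds_iff.1 h1
  have hC : ∀ s ∈ Icc 0 (ε / 2), 0 < C s := fun s hs =>
    hb (by rw [Real.dist_eq, sub_zero, abs_of_nonneg hs.1]; linarith [hs.2])
  refine ⟨ε / 2, by positivity, hC, fun s hs => ?_⟩
  rw [← h.zero]
  exact lt_of_hasDerivAt_pos hs.1 (fun x _ => h.hasDerivAt x)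
    fun x hx => hC x ⟨hx.1.le, hx.2.le.trans hs.2⟩

/-- On an initial arc the generalized sine is strictly concave. -/
theorem mul_cosine_lt_sine (h : IsGenSine p S C) {a : ℝ} (ha : 0 < a)
    (hC : ∀ s ∈ Icc 0 a, 0 < C s) (hS : ∀ s ∈ Ioc 0 a, 0 < S s) : a * C a < S a := by
  have hp := h.one_lt
  obtain ⟨ξ, hξ, he⟩ := exists_hasDerivAt_eq_slope S C ha
    h.continuous_sine.continuousOn fun x _ => h.hasDerivAt x
  rw [h.zero, sub_zero, sub_zero] at he
  have hlt := lt_of_hasDerivAt_pos (f := fun t => -(|C t| ^ (p - 2) * C t)) hξ.2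
    (fun x _ => (h.ode x).neg) fun x hx => by
      have h1 := hS x ⟨hξ.1.trans hx.1, hx.2.le⟩
      have h2 : 0 < |S x| ^ (p - 2) * S x :=
        mul_pos (Real.rpow_pos_of_pos (abs_pos.2 h1.ne') _) h1
      nlinarith
  have hcξ := hC ξ ⟨hξ.1.le, hξ.2.le⟩
  have hca := hC a (right_mem_Icc.2 ha.le)
  simp only [abs_of_pos hcξ, abs_of_pos hca, ← Real.rpow_add_one hcξ.ne',
    ← Real.rpow_add_one hca.ne'] at hlt
  have : C a < C ξ :=
    (Real.rpow_lt_rpow_iff hca.le hcξ.le (by linarith : 0 < p - 2 + 1)).1 (by linarith)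
  rw [he, lt_div_iff₀ ha] at this
  linarith

/-- The derivative of `|S| ^ p`, where `C` is the derivative of `S`. -/
noncomputable def powDeriv (p : ℝ) (S C : ℝ → ℝ) (x : ℝ) : ℝ :=
  p * (|S x| ^ (p - 2) * S x) * C x

theorem powDeriv_pos_iff (hp : 1 < p) {x : ℝ} : 0 < powDeriv p S C x ↔ 0 < S x * C x := by
  rcases eq_or_ne (S x) 0 with hs | hs
  · simp [powDeriv, hs]
  have : 0 < |S x| ^ (p - 2) := Real.rpow_pos_of_pos (abs_pos.2 hs) _
  have h1 : powDeriv p S C x = (p * |S x| ^ (p - 2)) * (S x * C x) := by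
    rw [powDeriv]; ring
  rw [h1]
  exact mul_pos_iff_of_pos_left (mul_pos (by linarith) this)

theorem mul_abs_rpow_sub (hp : 1 < p) (x s : ℝ) : p * |S x| ^ p - s * powDeriv p S C x =
    p * (|S x| ^ (p - 2) * S x) * (S x - s * C x) := by
  rcases eq_or_ne (S x) 0 with hs | hs
  · simp [powDeriv, hs, Real.zero_rpow (show p ≠ 0 by linarith)]
  have : |S x| ^ p = |S x| ^ (p - 2) * (S x * S x) := by
    rw [← abs_mul_abs_self (S x), ← pow_two, ← Real.rpow_natCast,
      ← Real.rpow_add (abs_pos.2 hs)]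
    norm_num
  rw [this, powDeriv]; ring

theorem mul_powDeriv_lt (h : IsGenSine p S C) {a : ℝ} (ha : 0 < a)
    (hC : ∀ s ∈ Icc 0 a, 0 < C s) (hS : ∀ s ∈ Ioc 0 a, 0 < S s) :
    a * powDeriv p S C a < p * |S a| ^ p := by
  have hp := h.one_lt
  have h1 := h.mul_cosine_lt_sine ha hC hS
  have h2 := hS a (right_mem_Ioc.2 ha)
  have h3 : 0 < |S a| ^ (p - 2) := Real.rpow_pos_of_pos (abs_pos.2 h2.ne') _
  rw [← sub_pos, mul_abs_rpow_sub hp]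
  have : 0 < S a - a * C a := by linarith
  positivity

theorem powDeriv_shift (h : IsGenSine p S C) {N : ℝ} (hN : S N = 0) (s : ℝ) :
    powDeriv p (fun s => C N * S (N + s)) (fun s => C N * C (N + s)) s =
      powDeriv p S C (N + s) := by
  have h1 : C N * C N = 1 := by rw [← abs_mul_abs_self, h.abs_cosine_eq_one hN, one_mul]
  simp only [powDeriv, abs_mul, h.abs_cosine_eq_one hN, one_mul]
  linear_combination p * |S (N + s)| ^ (p - 2) * S (N + s) * C (N + s) * h1

/-- Left of an interior zero, `|S| ^ p` decreases. -/
theorem exists_powDeriv_neg (h : IsGenSine p S C) {N : ℝ} (hN : S N = 0) :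
    ∃ η > 0, ∀ x ∈ Ico (N - η) N, powDeriv p S C x < 0 := by
  have hr := (h.shift hN).reflect
  obtain ⟨η, hη, hC, hS⟩ := hr.exists_pos_arc
  refine ⟨η, hη, fun x hx => ?_⟩
  have hs : N - x ∈ Ioc 0 η := ⟨by linarith [hx.2], by linarith [hx.1]⟩
  have h1 := mul_pos (hS _ hs) (hC _ (Ioc_subset_Icc_self hs))
  have h2 : 0 < powDeriv p (fun s => -(C N * S (N + -s))) (fun s => C N * C (N + -s)) (N - x) :=
    (powDeriv_pos_iff h.one_lt).2 h1
  have h3 := h.powDeriv_shift hN (-(N - x))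
  have h4 : N + -(N - x) = x := by ring
  rw [h4] at h3
  rw [← h3]
  simp only [powDeriv, abs_neg] at h2 ⊢
  linarith

/-- A point where `|S| ^ p` increases lies on an arc issuing from a zero `N`, about which
`|S| ^ p` is symmetric. -/
theorem exists_symmetric_arc (h : IsGenSine p S C) {b : ℝ} (hb : 0 ≤ b)
    (hpos : 0 < powDeriv p S C b) :
    ∃ N ∈ Ico 0 b, S N = 0 ∧ ∀ s ∈ Ioc 0 (b - N), |S (N - s)| ^ p = |S (N + s)| ^ p ∧
      powDeriv p S C (N - s) = -powDeriv p S C (N + s) ∧ 0 < powDeriv p S C (N + s) ∧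
      s * powDeriv p S C (N + s) ≤ p * |S (N + s)| ^ p := by
  have hp := h.one_lt
  rw [powDeriv_pos_iff hp] at hpos
  have hK : IsCompact (Icc 0 b ∩ S ⁻¹' {0}) :=
    isCompact_Icc.inter_right (isClosed_singleton.preimage h.continuous_sine)
  obtain ⟨N, ⟨hN, hN0⟩, hNmax⟩ := hK.exists_isGreatest ⟨0, left_mem_Icc.2 hb, h.zero⟩
  have hN0 : S N = 0 := hN0
  have hNb : N < b := by
    refine hN.2.lt_of_ne fun he => ?_
    rw [← he, hN0, zero_mul] at hpos
    exact lt_irrefl _ hpos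
  have hσ : |C N| = 1 := h.abs_cosine_eq_one hN0
  have hσ2 : C N * C N = 1 := by rw [← abs_mul_abs_self, hσ, one_mul]
  have h₁ := h.shift hN0
  set S₁ : ℝ → ℝ := fun s => C N * S (N + s) with hS₁
  set C₁ : ℝ → ℝ := fun s => C N * C (N + s) with hC₁
  obtain ⟨η, hη, -, hηS⟩ := h₁.exists_pos_arc
  have hSpos : ∀ s ∈ Ioc 0 (b - N), 0 < S₁ s := by
    intro s hs
    by_contra! hcon
    have hm : min η s ∈ Ioc 0 η := ⟨lt_min hη hs.1, min_le_left _ _⟩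
    obtain ⟨z, hz, hz0⟩ := intermediate_value_Icc' (min_le_right η s)
      h₁.continuous_sine.continuousOn ⟨hcon, (hηS _ hm).le⟩
    have hz0 : S (N + z) = 0 := by
      rcases mul_eq_zero.1 hz0 with h0 | h0
      · simp [h0] at hσ
      · exact h0
    have hz1 := hm.1.trans_le hz.1
    have := hNmax ⟨⟨by linarith [hN.1], by linarith [hz.2, hs.2]⟩, hz0⟩
    linarith
  have hab : 0 < b - N := by linarith
  have hCb : 0 < C₁ (b - N) := by
    have h2 : 0 < S₁ (b - N) * C₁ (b - N) := by
      have : S₁ (b - N) * C₁ (b - N) = S b * C b := by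
        simp only [hS₁, hC₁, add_sub_cancel]
        linear_combination S b * C b * hσ2
      rwa [this]
    exact (mul_pos_iff_of_pos_left (hSpos _ (right_mem_Ioc.2 hab))).1 h2
  have hCpos : ∀ s ∈ Icc 0 (b - N), 0 < C₁ s := by
    intro s hs
    have hle := le_of_hasDerivAt_nonneg (f := fun t => -(|C₁ t| ^ (p - 2) * C₁ t)) hs.2
      (fun x _ => (h₁.ode x).neg) fun x hx => by
        have h3 := hSpos x ⟨hs.1.trans_lt hx.1, hx.2.le⟩
        have h4 : 0 ≤ |S₁ x| ^ (p - 2) * S₁ x := by positivity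
        nlinarith
    have h5 : 0 < |C₁ (b - N)| ^ (p - 2) * C₁ (b - N) :=
      mul_pos (Real.rpow_pos_of_pos (abs_pos.2 hCb.ne') _) hCb
    have h6 : 0 < |C₁ s| ^ (p - 2) * C₁ s := by linarith
    exact pos_of_mul_pos_right h6 (by positivity)
  refine ⟨N, ⟨hN.1, hNb⟩, hN0, fun s hs => ?_⟩
  obtain ⟨e1, e2⟩ := h₁.cosine_eq_of_pos h₁.reflect hCpos s (Ioc_subset_Icc_self hs)
  have hpd := h.powDeriv_shift hN0 s
  have hpd' := h.powDeriv_shift hN0 (-s)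
  rw [← sub_eq_add_neg] at hpd'
  refine ⟨?_, ?_, ?_, ?_⟩
  · have : |S₁ s| ^ p = |S₁ (-s)| ^ p := by rw [e1, abs_neg]
    simp only [hS₁, abs_mul, hσ, one_mul, ← sub_eq_add_neg] at this
    exact this.symm
  · rw [← hpd, ← hpd']
    change p * (|S₁ (-s)| ^ (p - 2) * S₁ (-s)) * C₁ (-s) =
      -(p * (|S₁ s| ^ (p - 2) * S₁ s) * C₁ s)
    rw [e1, e2, abs_neg]; ring
  · rw [← hpd, powDeriv_pos_iff hp]
    exact mul_pos (hSpos s hs) (hCpos s (Ioc_subset_Icc_self hs))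
  · rw [← hpd]
    have := h₁.mul_powDeriv_lt hs.1 (fun t ht => hCpos t ⟨ht.1, ht.2.trans hs.2⟩)
      (fun t ht => hSpos t ⟨ht.1, ht.2.trans hs.2⟩)
    have h7 : |S₁ s| ^ p = |S (N + s)| ^ p := by simp only [hS₁, abs_mul, hσ, one_mul]
    rw [← h7]
    exact this.le

/-- Positivity of the weighted integral `J` of `p |S| ^ p - x (|S| ^ p)'`, expressed through its
derivative; the weight is governed by an antitone function `m`. -/
theorem weighted_integral_pos (h : IsGenSine p S C) {L ε : ℝ} {m R J : ℝ → ℝ}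
    (hε : 0 < ε) (hεL : ε ≤ L) (hmε : 0 < m ε) (hm : AntitoneOn m (Icc 0 L))
    (hm0 : ∀ x ∈ Icc 0 L, 0 ≤ m x) (hm1 : ∀ x ∈ Icc 0 L, m x ≤ 1)
    (hR0 : ∀ x ∈ Icc 0 L, 0 < R x)
    (hR : ∀ x ∈ Icc 0 L,
      HasDerivAt R (-(R x * (m x * powDeriv p S C x / (1 + m x * |S x| ^ p)))) x)
    (hJ : ∀ x ∈ Icc 0 L, HasDerivAt J (m x * R x / (1 + m x * |S x| ^ p) *
      (p * |S x| ^ p - x * powDeriv p S C x)) x)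
    (hJ0 : J 0 = 0) : 0 < J L := by
  have hp := h.one_lt
  have hf0 : ∀ x, 0 ≤ |S x| ^ p := fun x => by positivity
  have hf1 := h.abs_rpow_sine_le_one
  have hden : ∀ x ∈ Icc 0 L, 0 < 1 + m x * |S x| ^ p := fun x hx => by
    have := mul_nonneg (hm0 x hx) (hf0 x)
    linarith
  have hc0 : ∀ x ∈ Icc 0 L, 0 ≤ m x * R x / (1 + m x * |S x| ^ p) := fun x hx =>
    div_nonneg (mul_nonneg (hm0 x hx) (hR0 x hx).le) (hden x hx).le
  obtain ⟨η, hη, hηC, hηS⟩ := h.exists_pos_arc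
  set δ := min η ε with hδ
  have hδ0 : 0 < δ := lt_min hη hε
  have hδL : δ ≤ L := (min_le_right _ _).trans hεL
  have hδη : δ ≤ η := min_le_left _ _
  have hmono : ∀ a b, 0 ≤ a → a ≤ b → b ≤ L →
      (∀ x ∈ Ioo a b, x * powDeriv p S C x ≤ p * |S x| ^ p) → J a ≤ J b :=
    fun a b ha hab hb hx => le_of_hasDerivAt_nonneg hab
      (fun x hx => hJ x ⟨ha.trans hx.1, hx.2.trans hb⟩) fun x hx' =>
        mul_nonneg (hc0 x ⟨ha.trans hx'.1.le, hx'.2.le.trans hb⟩) (sub_nonneg.2 (hx x hx'))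
  have hJδ : 0 < J δ := by
    rw [← hJ0]
    refine lt_of_hasDerivAt_pos hδ0 (fun x hx => hJ x ⟨hx.1, hx.2.trans hδL⟩) fun x hx => ?_
    have hxL : x ∈ Icc 0 L := ⟨hx.1.le, hx.2.le.trans hδL⟩
    have hmx : 0 < m x := hmε.trans_le
      (hm hxL ⟨hε.le, hεL⟩ (hx.2.le.trans (min_le_right _ _)))
    have := h.mul_powDeriv_lt hx.1
      (fun t ht => hηC t ⟨ht.1, ht.2.trans (hx.2.le.trans hδη)⟩)
      (fun t ht => hηS t ⟨ht.1, ht.2.trans (hx.2.le.trans hδη)⟩)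
    exact mul_pos (div_pos (mul_pos hmx (hR0 x hxL)) (hden x hxL)) (sub_pos.2 this)
  have hJc : ContinuousOn J (Icc δ L) := fun x hx =>
    (hJ x ⟨hδ0.le.trans hx.1, hx.2⟩).continuousAt.continuousWithinAt
  obtain ⟨x₁, hx₁, hmin⟩ := isCompact_Icc.exists_isMinOn (nonempty_Icc.2 hδL) hJc
  have hZ : IsCompact (Icc δ L ∩ J ⁻¹' Iic (J x₁)) :=
    isCompact_Icc.of_isClosed_subset (hJc.preimage_isClosed_of_isClosed isClosed_Icc isClosed_Iic)
      inter_subset_left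
  obtain ⟨X, ⟨hX, hX1⟩, hXmin⟩ := hZ.exists_isLeast ⟨x₁, hx₁, le_refl (J x₁)⟩
  have hX1 : J X ≤ J x₁ := hX1
  suffices hXδ : X = δ by
    have h1 : J x₁ ≤ J L := hmin (right_mem_Icc.2 hδL)
    rw [hXδ] at hX1
    linarith
  by_contra hne
  have hδX : δ < X := lt_of_le_of_ne hX.1 (Ne.symm hne)
  suffices ∃ y ∈ Ico δ X, J y ≤ J X by
    obtain ⟨y, hy, hyX⟩ := this
    exact absurd (hXmin ⟨⟨hy.1, hy.2.le.trans hX.2⟩, hyX.trans hX1⟩) (not_le.2 hy.2)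
  have hX0 : 0 < X := hδ0.trans hδX
  have hXL : X ∈ Icc 0 L := ⟨hX0.le, hX.2⟩
  rcases lt_or_ge 0 (powDeriv p S C X) with hd | hd
  · obtain ⟨N, hN, hSN, harc⟩ := h.exists_symmetric_arc hX0.le hd
    rcases hN.1.eq_or_lt with hN0 | hN0
    · refine ⟨δ, ⟨le_rfl, hδX⟩, hmono δ X hδ0.le hδX.le hX.2 fun x hx => ?_⟩
      have := (harc x ⟨hδ0.trans hx.1, by linarith [hx.2]⟩).2.2.2
      rwa [← hN0, zero_add] at this
    · have hδN : δ < N := by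
        by_contra! hcon
        have := hηS N ⟨hN0, hcon.trans hδη⟩
        linarith
      have hδ1 : 0 < powDeriv p S C δ := (powDeriv_pos_iff hp).2
        (mul_pos (hηS δ ⟨hδ0, hδη⟩) (hηC δ ⟨hδ0.le, hδη⟩))
      have hs0 : δ ≤ N - (X - N) := by
        by_contra! hcon
        have := harc (N - δ) ⟨by linarith, by linarith⟩
        rw [sub_sub_cancel] at this
        linarith [this.2.1, this.2.2.1]
      refine ⟨N - (X - N), ⟨hs0, by linarith [hN.2]⟩, ?_⟩
      have hp1 : ∀ s ∈ Icc 0 (X - N), N + s ∈ Icc 0 L := fun s hs =>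
        ⟨by linarith [hs.1], by linarith [hs.2, hX.2]⟩
      have hp2 : ∀ s ∈ Icc 0 (X - N), N - s ∈ Icc 0 L := fun s hs =>
        ⟨by linarith [hs.2], by linarith [hs.1, hX.2, hN.2]⟩
      have hNL : N ∈ Icc 0 L := ⟨hN0.le, hN.2.le.trans hX.2⟩
      have hW : ∀ μ : ℝ, ∀ x ∈ Icc 0 L, HasDerivAt (fun t => R t * (1 + μ * |S t| ^ p))
          (R x * powDeriv p S C x * (μ - m x) / (1 + m x * |S x| ^ p)) x := fun μ x hx => by
        refine ((hR x hx).mul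
          (((h.hasDerivAt_abs_rpow_sine x).const_mul μ).const_add 1)).congr_deriv ?_
        have := (hden x hx).ne'
        rw [← powDeriv]
        field_simp
        ring
      have hfN : |S N| ^ p = 0 := by rw [hSN, abs_zero, Real.zero_rpow (by linarith)]
      have key := le_of_hasDerivAt_nonneg (a := 0) (b := X - N)
        (f := fun s => J (N + s) - J (N - s)) (by linarith [hN.2])
        (fun s hs => ((hJ _ (hp1 s hs)).comp s ((hasDerivAt_id s).const_add N)).sub
          ((hJ _ (hp2 s hs)).comp s ((hasDerivAt_id s).const_sub N))) fun s hs => by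
          have hs' := Ioo_subset_Icc_self hs
          obtain ⟨e1, e2, e3, e4⟩ := harc s (Ioo_subset_Ioc_self hs)
          have hm12 : m (N + s) ≤ m (N - s) :=
            hm (hp2 s hs') (hp1 s hs') (by linarith [hs.1])
          have hW2 : R N ≤ R (N - s) * (1 + m (N - s) * |S (N - s)| ^ p) := by
            have := le_of_hasDerivAt_nonneg (a := N - s) (b := N) (by linarith [hs.1])
              (fun x hx => (hW (m (N - s)) x
                ⟨(hp2 s hs').1.trans hx.1, hx.2.trans hNL.2⟩).neg) fun x hx => by
                have hxL : x ∈ Icc 0 L := ⟨(hp2 s hs').1.trans hx.1.le, hx.2.le.trans hNL.2⟩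
                obtain ⟨-, g2, g3, -⟩ := harc (N - x)
                  ⟨by linarith [hx.2], by linarith [hx.1, hs.2]⟩
                rw [sub_sub_cancel] at g2
                have g4 : m x ≤ m (N - s) := hm (hp2 s hs') hxL hx.1.le
                rw [← neg_div]
                refine div_nonneg ?_ (hden x hxL).le
                have : 0 ≤ R x * (-powDeriv p S C x) * (m (N - s) - m x) :=
                  mul_nonneg (mul_nonneg (hR0 x hxL).le (by linarith)) (by linarith)
                linarith
            simp only [Pi.neg_apply, hfN] at this
            linarith
          have hW1 : R (N + s) * (1 + m (N + s) * |S (N + s)| ^ p) ≤ R N := by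
            have := le_of_hasDerivAt_nonneg (a := N) (b := N + s) (by linarith [hs.1])
              (fun x hx => (hW (m (N + s)) x
                ⟨hNL.1.trans hx.1, hx.2.trans (hp1 s hs').2⟩).neg) fun x hx => by
                have hxL : x ∈ Icc 0 L := ⟨hNL.1.trans hx.1.le, hx.2.le.trans (hp1 s hs').2⟩
                obtain ⟨-, -, g3, -⟩ := harc (x - N)
                  ⟨by linarith [hx.1], by linarith [hx.2, hs.2]⟩
                rw [add_sub_cancel] at g3
                have g4 : m (N + s) ≤ m x := hm hxL (hp1 s hs') hx.2.le
                rw [← neg_div]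
                refine div_nonneg ?_ (hden x hxL).le
                have : 0 ≤ R x * powDeriv p S C x * (m x - m (N + s)) :=
                  mul_nonneg (mul_nonneg (hR0 x hxL).le g3.le) (by linarith)
                linarith
            simp only [Pi.neg_apply, hfN] at this
            linarith
          have hc : m (N + s) * R (N + s) / (1 + m (N + s) * |S (N + s)| ^ p) ≤
              m (N - s) * R (N - s) / (1 + m (N - s) * |S (N - s)| ^ p) := by
            have d1 := hden _ (hp1 s hs')
            have d2 := hden _ (hp2 s hs')
            have a1 := hm0 _ (hp1 s hs')
            have a2 := hm0 _ (hp2 s hs')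
            have b1 := hm1 _ (hp1 s hs')
            have b2 := hm1 _ (hp2 s hs')
            have c1 := hf0 (N + s)
            have c2 := hf1 (N + s)
            have r1 := hR0 _ (hp1 s hs')
            have r2 := hR0 _ (hp2 s hs')
            rw [e1] at d2 hW2 ⊢
            generalize |S (N + s)| ^ p = v at *
            generalize m (N + s) = m₁ at *
            generalize m (N - s) = m₂ at *
            generalize R (N + s) = R₁ at *
            generalize R (N - s) = R₂ at *
            have q1 : m₁ / (1 + m₁ * v) ^ 2 ≤ m₂ / (1 + m₂ * v) ^ 2 := by
              rw [div_le_div_iff₀ (by positivity) (by positivity)]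
              have t1 : m₁ * m₂ ≤ 1 := mul_le_one₀ b1 a2 b2
              have t2 : v * v ≤ 1 := mul_le_one₀ c2 c1 c2
              have t3 : (m₁ * m₂) * (v * v) ≤ 1 := mul_le_one₀ t1 (by positivity) t2
              nlinarith [mul_nonneg (sub_nonneg.2 hm12) (sub_nonneg.2 t3)]
            have q2 : R₁ * (1 + m₁ * v) ≤ R₂ * (1 + m₂ * v) := hW1.trans hW2
            calc m₁ * R₁ / (1 + m₁ * v) = (R₁ * (1 + m₁ * v)) * (m₁ / (1 + m₁ * v) ^ 2) := by
                  field_simp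
              _ ≤ (R₂ * (1 + m₂ * v)) * (m₂ / (1 + m₂ * v) ^ 2) := by
                  gcongr
              _ = m₂ * R₂ / (1 + m₂ * v) := by field_simp
          have k1 := hc0 _ (hp1 s hs')
          have k2 := hc0 _ (hp2 s hs')
          rw [e1] at hc k2 ⊢
          rw [e2]
          have hNs : 0 ≤ N - s := (hp2 s hs').1
          generalize m (N + s) * R (N + s) / (1 + m (N + s) * |S (N + s)| ^ p) = c₁ at *
          generalize m (N - s) * R (N - s) / (1 + m (N - s) * |S (N + s)| ^ p) = c₂ at *
          generalize powDeriv p S C (N + s) = d at *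
          have hv : 0 ≤ p * |S (N + s)| ^ p := mul_nonneg (by linarith) (hf0 _)
          generalize p * |S (N + s)| ^ p = v at *
          have l1 : 0 ≤ v + (N - s) * d := by positivity
          rcases le_total 0 (v - (N + s) * d) with l2 | l2
          · have i1 := mul_nonneg k1 l2
            have i2 := mul_nonneg k2 l1
            linarith
          · have i1 := mul_nonneg (sub_nonneg.2 hc) (neg_nonneg.2 l2)
            have i2 := mul_nonneg k2 (sub_nonneg.2 e4)
            linarith
      simp only [add_zero, sub_zero, sub_self, add_sub_cancel] at key
      linarith
  · suffices ∃ a < X, ∀ x ∈ Ioo a X, x * powDeriv p S C x ≤ p * |S x| ^ p by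
      obtain ⟨a, haX, ha⟩ := this
      refine ⟨max δ a, ⟨le_max_left _ _, max_lt hδX haX⟩,
        hmono _ _ (hδ0.le.trans (le_max_left _ _)) (max_lt hδX haX).le hX.2 fun x hx =>
          ha x ⟨(le_max_right _ _).trans_lt hx.1, hx.2⟩⟩
    by_cases hS : S X = 0
    · obtain ⟨η', hη', hneg⟩ := h.exists_powDeriv_neg hS
      refine ⟨max 0 (X - η'), max_lt hX0 (by linarith), fun x hx => ?_⟩
      have h1 := hneg x ⟨(le_max_right _ _).trans hx.1.le, hx.2⟩
      have h2 : 0 < x := (le_max_left _ _).trans_lt hx.1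
      have h3 : 0 ≤ p * |S x| ^ p := mul_nonneg (by linarith) (hf0 x)
      nlinarith [mul_pos h2 (neg_pos.2 h1)]
    · have hlt : X * powDeriv p S C X < p * |S X| ^ p := by
        have h1 : 0 < p * |S X| ^ p :=
          mul_pos (by linarith) (Real.rpow_pos_of_pos (abs_pos.2 hS) _)
        nlinarith [mul_nonneg hX0.le (neg_nonneg.2 hd)]
      have hcont1 : Continuous fun x => x * powDeriv p S C x :=
        continuous_id.mul h.continuous_deriv_abs_rpow_sine
      have hcont2 : Continuous fun x => p * |S x| ^ p :=
        continuous_const.mul (continuous_iff_continuousAt.2 fun x =>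
          (h.hasDerivAt_abs_rpow_sine x).continuousAt)
      have hev := (hcont1.tendsto X).eventually_lt (hcont2.tendsto X) hlt
      obtain ⟨r, hr, hb⟩ := Metric.eventually_nhds_iff.1 hev
      refine ⟨X - r, by linarith, fun x hx => (hb ?_).le⟩
      rw [Real.dist_eq, abs_sub_lt_iff]
      constructor <;> linarith [hx.1, hx.2]

end IsGenSine

/-- Differentiation of solutions of `y' = 1 + Q x * g r y`, `y 0 = 0`, in the parameter `r`. -/
theorem hasDerivAt_solution_param {x₀ ρ M K : ℝ} (hx₀ : 0 ≤ x₀) (hρ : 0 < ρ) (hM : 0 ≤ M)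
    (hK : 0 ≤ K) {Q y u : ℝ → ℝ} {g D θ : ℝ → ℝ → ℝ}
    (hQ : ∀ x ∈ Icc 0 x₀, |Q x| ≤ M)
    (hg : ∀ r, |r - ρ| < ρ / 2 → ∀ s t, |g r s - g r t| ≤ K * |s - t|)
    (hθ0 : ∀ r, 0 < r → θ 0 r = 0)
    (hθ : ∀ r, 0 < r → ∀ x ∈ Icc 0 x₀,
      HasDerivAt (fun t => θ t r) (1 + Q x * g r (θ x r)) x)
    (hy : ∀ x ∈ Icc 0 x₀, y x = θ x ρ)
    (hy' : ∀ x ∈ Icc 0 x₀, HasDerivAt y (1 + Q x * g ρ (y x)) x)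
    (hD : ∀ x, ∀ k, |k| < ρ / 2 →
      HasDerivAt (fun k => g (ρ + k) (y x + k * u x)) (D k x) k)
    (hDc : ∀ x, ContinuousAt (fun z : ℝ × ℝ => D z.1 z.2) (0, x))
    (hu0 : u 0 = 0) (hu : ∀ x ∈ Icc 0 x₀, HasDerivAt u (Q x * D 0 x) x) :
    HasDerivAt (fun r => θ x₀ r) (u x₀) ρ := by
  rw [hasDerivAt_iff_isLittleO_nhds_zero, Asymptotics.isLittleO_iff]
  intro c hc
  set κ : ℝ := M * K + 1 with hκ
  have hκ0 : 0 < κ := by positivity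
  set B : ℝ := (Real.exp (κ * x₀) - 1) / κ with hB
  have hB0 : 0 ≤ B := div_nonneg
    (by linarith [Real.one_le_exp (mul_nonneg hκ0.le hx₀)]) hκ0.le
  set ε : ℝ := c / ((M + 1) * (B + 1)) with hε
  have hε0 : 0 < ε := by positivity
  have hunif : ∀ᶠ k in 𝓝 (0 : ℝ), ∀ x ∈ Icc 0 x₀, |D k x - D 0 x| < ε := by
    refine isCompact_Icc.eventually_forall_of_forall_eventually fun x _ => ?_
    have h2 : ContinuousAt (fun z : ℝ × ℝ => D 0 z.2) (0, x) :=
      ContinuousAt.comp' (f := fun z : ℝ × ℝ => ((0 : ℝ), z.2)) (x := ((0 : ℝ), x)) (hDc x)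
        (continuous_const.prodMk continuous_snd).continuousAt
    have h3 : ContinuousAt (fun z : ℝ × ℝ => |D z.1 z.2 - D 0 z.2|) (0, x) :=
      ((hDc x).sub h2).abs
    exact h3.eventually (gt_mem_nhds (by simpa using hε0))
  obtain ⟨r, hr, hball⟩ := Metric.eventually_nhds_iff.1 hunif
  filter_upwards [Metric.ball_mem_nhds (0 : ℝ) (lt_min hr (half_pos hρ))] with k hk
  have hkr : ∀ l ∈ Metric.ball (0 : ℝ) (min r (ρ / 2)), |l| < r ∧ |l| < ρ / 2 := fun l hl => by
    rw [Metric.mem_ball, dist_zero_right, Real.norm_eq_abs] at hl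
    exact lt_min_iff.1 hl
  have hkρ : 0 < ρ + k := by
    have := (abs_lt.1 (hkr k hk).2).1
    linarith
  have htaylor : ∀ x ∈ Icc 0 x₀,
      |g (ρ + k) (y x + k * u x) - g ρ (y x) - k * D 0 x| ≤ ε * |k| := by
    intro x hx
    have h1 := (convex_ball (0 : ℝ) (min r (ρ / 2))).norm_image_sub_le_of_norm_hasDerivWithin_le
      (f := fun l => g (ρ + l) (y x + l * u x) - l * D 0 x) (f' := fun l => D l x - D 0 x)
      (C := ε) (x := 0) (y := k)
      (fun l hl => ((hD x l (hkr l hl).2).sub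
        (((hasDerivAt_id l).mul_const (D 0 x)).congr_deriv (one_mul _))).hasDerivWithinAt)
      (fun l hl => (hball (by simpa using (hkr l hl).1) x hx).le)
      (Metric.mem_ball_self (lt_min hr (half_pos hρ))) hk
    simp only [add_zero, zero_mul, sub_zero, Real.norm_eq_abs] at h1
    rw [sub_right_comm]
    exact h1
  have hlip : ∀ x ∈ Ico 0 x₀,
      LipschitzOnWith κ.toNNReal (fun t => 1 + Q x * g (ρ + k) t) univ := by
    intro x hx
    refine LipschitzOnWith.of_dist_le_mul fun s _ t _ => ?_
    have h1 := hg (ρ + k) (by simpa using (hkr k hk).2) s t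
    rw [Real.coe_toNNReal κ hκ0.le, Real.dist_eq, Real.dist_eq, add_sub_add_left_eq_sub, ← mul_sub, abs_mul]
    calc |Q x| * |g (ρ + k) s - g (ρ + k) t| ≤ M * (K * |s - t|) := by
          gcongr
          exact hQ x (Ico_subset_Icc_self hx)
      _ ≤ κ * |s - t| := by
          rw [hκ]
          nlinarith [abs_nonneg (s - t)]
  have hder : ∀ x ∈ Icc 0 x₀, HasDerivAt (fun t => y t + k * u t)
      (1 + Q x * g ρ (y x) + k * (Q x * D 0 x)) x := fun x hx =>
    (hy' x hx).add ((hu x hx).const_mul k)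
  have hgron := dist_le_of_approx_trajectories_ODE_of_mem (δ := 0) (εf := 0)
    (εg := M * (ε * |k|)) (a := 0) (b := x₀) (s := fun _ => univ)
    (v := fun x t => 1 + Q x * g (ρ + k) t) (K := κ.toNNReal)
    hlip
    (fun x hx => (hθ (ρ + k) hkρ x hx).continuousAt.continuousWithinAt)
    (fun x hx => (hθ (ρ + k) hkρ x (Ico_subset_Icc_self hx)).hasDerivWithinAt)
    (fun x _ => (dist_self _).le) (fun _ _ => mem_univ _)
    (fun x hx => (hder x hx).continuousAt.continuousWithinAt)
    (fun x hx => (hder x (Ico_subset_Icc_self hx)).hasDerivWithinAt)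
    (fun x hx => by
      have hx' := Ico_subset_Icc_self hx
      have h1 := htaylor x hx'
      rw [Real.dist_eq]
      have h2 : 1 + Q x * g ρ (y x) + k * (Q x * D 0 x) -
          (1 + Q x * g (ρ + k) (y x + k * u x)) =
          -(Q x * (g (ρ + k) (y x + k * u x) - g ρ (y x) - k * D 0 x)) := by ring
      rw [h2, abs_neg, abs_mul]
      exact mul_le_mul (hQ x hx') h1 (abs_nonneg _) hM)
    (fun _ _ => mem_univ _)
    (by rw [hθ0 _ hkρ, hy 0 (left_mem_Icc.2 hx₀), hθ0 _ hρ, hu0]; simp)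
    x₀ (right_mem_Icc.2 hx₀)
  rw [Real.coe_toNNReal κ hκ0.le, gronwallBound_of_K_ne_0 hκ0.ne', Real.dist_eq, hy x₀ (right_mem_Icc.2 hx₀)] at hgron
  rw [Real.norm_eq_abs, Real.norm_eq_abs, smul_eq_mul, sub_sub]
  refine hgron.trans ?_
  have h1 : 0 * Real.exp (κ * (x₀ - 0)) + (0 + M * (ε * |k|)) / κ *
      (Real.exp (κ * (x₀ - 0)) - 1) = (M * B) * ε * |k| := by
    rw [hB, sub_zero]; ring
  simp only [h1]
  gcongr
  rw [hε, mul_div_assoc', div_le_iff₀ (by positivity)]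
  nlinarith [mul_nonneg hM hB0]

open IsGenSine

/-- A function on the line with derivative bounded below by a positive constant has a
differentiable inverse. -/
theorem exists_inverse_hasDerivAt {Φ F : ℝ → ℝ} {ρ : ℝ} (hρ : 0 < ρ)
    (hΦ : ∀ x, HasDerivAt Φ (F x) x) (hF : ∀ x, ρ ≤ F x) :
    ∃ ξ : ℝ → ℝ, StrictMono ξ ∧ (∀ z, Φ (ξ z) = z) ∧ (∀ x, ξ (Φ x) = x) ∧
      ∀ z, HasDerivAt ξ (F (ξ z))⁻¹ z := by
  have hmono : StrictMono Φ := fun a b hab =>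
    lt_of_hasDerivAt_pos hab (fun x _ => hΦ x) fun x _ => hρ.trans_le (hF x)
  have hgrow : ∀ a b, a ≤ b → Φ a + ρ * (b - a) ≤ Φ b := fun a b hab => by
    have := le_of_hasDerivAt_nonneg (f := fun x => Φ x - x * ρ) hab
      (fun x _ => (hΦ x).sub (((hasDerivAt_id x).mul_const ρ).congr_deriv (one_mul ρ)))
      fun x _ => sub_nonneg.2 (hF x)
    linarith
  have hcont : Continuous Φ := continuous_iff_continuousAt.2 fun x => (hΦ x).continuousAt
  have hsurj : Function.Surjective Φ := fun z => by
    have hr : 0 ≤ |z - Φ 0| / ρ := by positivity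
    have h1 := hgrow 0 _ hr
    have h2 := hgrow (-(|z - Φ 0| / ρ)) 0 (by linarith)
    have h3 : ρ * (|z - Φ 0| / ρ) = |z - Φ 0| := by field_simp
    rw [sub_zero, h3] at h1
    rw [sub_neg_eq_add, zero_add, h3] at h2
    exact mem_range_of_exists_le_of_exists_ge hcont
      ⟨-(|z - Φ 0| / ρ), by linarith [neg_abs_le (z - Φ 0)]⟩
      ⟨|z - Φ 0| / ρ, by linarith [le_abs_self (z - Φ 0)]⟩
  let e := hmono.orderIsoOfSurjective Φ hsurj
  have he : ∀ z, Φ (e.symm z) = z := fun z => e.apply_symm_apply z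
  refine ⟨e.symm, e.symm.strictMono, he, fun x => e.symm_apply_apply x, fun z => ?_⟩
  exact (hΦ _).of_local_left_inverse e.symm.continuous.continuousAt
    (hρ.trans_le (hF _)).ne' (Eventually.of_forall he)

/-- Solutions of the Prüfer equation, reparametrized by the angle, satisfy the hypotheses of
`IsGenSine.weighted_integral_pos`. -/
theorem IsGenSine.prufer_integral_pos {p x₀ ρ : ℝ} {S C Φ m R J : ℝ → ℝ} (h : IsGenSine p S C)
    (hρ : 0 < ρ) (hm : Antitone m) (hm0 : ∀ x, 0 ≤ m x) (hm1 : ∀ x, m x ≤ 1)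
    {ψ : ℝ → ℝ} (hψ : ∀ x ∈ Icc 0 x₀, ψ x = Φ x) (hΦ0 : Φ 0 = 0)
    (hΦ : ∀ x, HasDerivAt Φ (ρ * (1 + m x * |S (ψ x)| ^ p)) x)
    (hR0 : ∀ x, 0 < R x)
    (hR : ∀ x, HasDerivAt R (-(R x * (ρ * m x * powDeriv p S C (ψ x)))) x)
    (hJ0 : J 0 = 0)
    (hJ : ∀ x, HasDerivAt J
      (ρ * (m x * R x * (p * |S (ψ x)| ^ p - ψ x * powDeriv p S C (ψ x)))) x)
    {x : ℝ} (hx : x ∈ Ioc 0 x₀) (hmx : 0 < m x) : 0 < J x₀ := by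
  have hden : ∀ x, 1 ≤ 1 + m x * |S (ψ x)| ^ p := fun x => by
    have : 0 ≤ m x * |S (ψ x)| ^ p := mul_nonneg (hm0 x) (by positivity)
    linarith
  obtain ⟨ξ, hξm, hΦξ, hξΦ, hξ⟩ := exists_inverse_hasDerivAt hρ hΦ
    fun x => le_mul_of_one_le_right hρ.le (hden x)
  have hΦm : StrictMono Φ := fun a b hab => by
    rw [← hξm.lt_iff_lt, hξΦ, hξΦ]; exact hab
  have hξ0 : ξ 0 = 0 := by rw [← hΦ0, hξΦ, hΦ0]
  have hmem : ∀ z ∈ Icc 0 (Φ x₀), ψ (ξ z) = z := fun z hz => by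
    rw [hψ, hΦξ]
    constructor
    · rw [← hξ0]; exact hξm.monotone hz.1
    · rw [← hξΦ x₀]; exact hξm.monotone hz.2
  have := h.weighted_integral_pos (L := Φ x₀) (ε := Φ x) (m := m ∘ ξ) (R := R ∘ ξ) (J := J ∘ ξ)
    (by rw [← hΦ0]; exact hΦm hx.1) (hΦm.monotone hx.2) (by simpa [hξΦ] using hmx)
    ((hm.comp_monotone hξm.monotone).antitoneOn _) (fun _ _ => hm0 _) (fun _ _ => hm1 _)
    (fun _ _ => hR0 _)
    (fun z hz => by
      refine ((hR (ξ z)).comp z (hξ z)).congr_deriv ?_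
      have h1 := hden (ξ z)
      rw [hmem z hz] at h1 ⊢
      simp only [Function.comp_apply]
      field_simp)
    (fun z hz => by
      refine ((hJ (ξ z)).comp z (hξ z)).congr_deriv ?_
      have h1 := hden (ξ z)
      rw [hmem z hz] at h1 ⊢
      simp only [Function.comp_apply]
      field_simp)
    (by simp [hξ0, hJ0])
  simpa [hξΦ] using this

/-- The derivative of the Prüfer nonlinearity along an affine perturbation of parameter and
angle. -/
theorem IsGenSine.hasDerivAt_perturbation {p : ℝ} {S C : ℝ → ℝ} (h : IsGenSine p S C)
    {ρ k : ℝ} (hk : 0 < ρ + k) (y u : ℝ) :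
    HasDerivAt (fun k => (ρ + k) ^ (-p) * |S ((ρ + k) * (y + k * u))| ^ p)
      (-p * (ρ + k) ^ (-p - 1) * |S ((ρ + k) * (y + k * u))| ^ p + (ρ + k) ^ (-p) *
        (powDeriv p S C ((ρ + k) * (y + k * u)) * ((y + k * u) + (ρ + k) * u))) k := by
  have h1 : HasDerivAt (fun k => ρ + k) 1 k := (hasDerivAt_id k).const_add ρ
  have h2 : HasDerivAt (fun k => y + k * u) u k :=
    (((hasDerivAt_id k).mul_const u).const_add y).congr_deriv (one_mul u)
  have h3 := (h.hasDerivAt_abs_rpow_sine ((ρ + k) * (y + k * u))).comp k (h1.mul h2)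
  exact ((h1.rpow_const (Or.inl hk.ne')).mul h3).congr_deriv (by
    simp only [powDeriv, Function.comp_apply, Pi.mul_apply]; ring)

theorem IsGenSine.abs_rpow_sine_sub_le {p : ℝ} {S C : ℝ → ℝ} (h : IsGenSine p S C) (s t : ℝ) :
    |(|S s| ^ p - |S t| ^ p)| ≤ p * |s - t| := by
  simpa only [Real.norm_eq_abs] using
    Convex.norm_image_sub_le_of_norm_hasDerivWithin_le
      (fun x _ => (h.hasDerivAt_abs_rpow_sine x).hasDerivWithinAt)
      (fun x _ => h.abs_deriv_abs_rpow_sine_le x) convex_univ (mem_univ t) (mem_univ s)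

/-- The derivative of the normalized Prüfer angle with respect to the parameter is negative where
the potential does not vanish identically, and nonpositive in general. -/
theorem IsGenSine.prufer_param_deriv {p x₀ ρ d : ℝ} {S C q : ℝ → ℝ} {φ : ℝ → ℝ → ℝ}
    (h : IsGenSine p S C) (hx₀ : 0 ≤ x₀) (hρ : 0 < ρ)
    (hqc : ContinuousOn q (Icc 0 x₀)) (hq : ∀ x ∈ Icc 0 x₀, q x ≤ 0)
    (hqm : MonotoneOn q (Icc 0 x₀)) (hqρ : -q 0 ≤ ρ ^ p)
    (hφ0 : ∀ r, 0 < r → φ 0 r = 0)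
    (hφ : ∀ r, 0 < r → ∀ x ∈ Icc 0 x₀,
      HasDerivAt (fun t => φ t r) (r - q x / r ^ (p - 1) * |S (φ x r)| ^ p) x)
    (hd : HasDerivAt (fun r => φ x₀ r / r) d ρ) :
    d ≤ 0 ∧ ∀ x ∈ Ioc 0 x₀, q x ≠ 0 → d < 0 := by
  have hp := h.one_lt
  have h0mem : (0 : ℝ) ∈ Icc 0 x₀ := left_mem_Icc.2 hx₀
  let π : ℝ → ℝ := fun x => projIcc 0 x₀ hx₀ x
  have hπc : Continuous π := continuous_subtype_val.comp continuous_projIcc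
  have hπ : ∀ x, π x ∈ Icc 0 x₀ := fun x => (projIcc 0 x₀ hx₀ x).2
  have hπe : ∀ x ∈ Icc 0 x₀, π x = x := fun x hx => by simp [π, projIcc_of_mem hx₀ hx]
  have hπm : Monotone π := fun a b hab => monotone_projIcc hx₀ hab
  let Q : ℝ → ℝ := fun x => -q (π x)
  have hQc : Continuous Q := (hqc.comp_continuous hπc hπ).neg
  have hQ0 : ∀ x, 0 ≤ Q x := fun x => neg_nonneg.2 (hq _ (hπ x))
  have hQM : ∀ x, Q x ≤ -q 0 := fun x => neg_le_neg (hqm h0mem (hπ x) (hπ x).1)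
  have hQa : Antitone Q := fun a b hab => neg_le_neg (hqm (hπ a) (hπ b) (hπm hab))
  have hρp : 0 < ρ ^ p := Real.rpow_pos_of_pos hρ p
  let m : ℝ → ℝ := fun x => Q x / ρ ^ p
  have hmc : Continuous m := hQc.div_const _
  have hm0 : ∀ x, 0 ≤ m x := fun x => div_nonneg (hQ0 x) hρp.le
  have hm1 : ∀ x, m x ≤ 1 := fun x => (div_le_one hρp).2 ((hQM x).trans hqρ)
  have hma : Antitone m := fun a b hab => div_le_div_of_nonneg_right (hQa hab) hρp.le
  let ψ : ℝ → ℝ := fun x => φ (π x) ρ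
  have hψc : Continuous ψ :=
    ContinuousOn.comp_continuous (g := fun t => φ t ρ)
      (fun x hx => (hφ ρ hρ x hx).continuousAt.continuousWithinAt) hπc hπ
  have hfc : Continuous fun s => |S s| ^ p :=
    continuous_iff_continuousAt.2 fun s => (h.hasDerivAt_abs_rpow_sine s).continuousAt
  have hf1c : Continuous (powDeriv p S C) := h.continuous_deriv_abs_rpow_sine
  have hprim : ∀ F : ℝ → ℝ, Continuous F → ∀ x, HasDerivAt (fun x => ∫ t in (0)..x, F t) (F x) x :=
    fun F hF x => (hF.integral_hasStrictDerivAt 0 x).hasDerivAt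
  have hfψ : Continuous fun x => |S (ψ x)| ^ p := hfc.comp hψc
  have hf1ψ : Continuous fun x => powDeriv p S C (ψ x) := hf1c.comp hψc
  let F : ℝ → ℝ := fun x => ρ * (1 + m x * |S (ψ x)| ^ p)
  have hFc : Continuous F := by fun_prop
  let Φ : ℝ → ℝ := fun x => ∫ t in (0)..x, F t
  have hΦ : ∀ x, HasDerivAt Φ (F x) x := hprim F hFc
  have hΦ0 : Φ 0 = 0 := intervalIntegral.integral_same
  have hpow : ∀ r : ℝ, 0 < r → r ^ p = r ^ (p - 1) * r := fun r hr => by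
    rw [Real.rpow_sub_one hr.ne', div_mul_cancel₀ _ hr.ne']
  have hψe : ∀ x ∈ Icc 0 x₀, ψ x = φ x ρ := fun x hx => by simp only [ψ, hπe x hx]
  have hQe : ∀ x ∈ Icc 0 x₀, Q x = -q x := fun x hx => by simp only [Q, hπe x hx]
  have hψΦ : ∀ x ∈ Icc 0 x₀, ψ x = Φ x := fun x hx => by
    have hdiff : ∀ t ∈ Icc 0 x, HasDerivAt (fun t => φ t ρ - Φ t) 0 t := fun t ht => by
      have ht' : t ∈ Icc 0 x₀ := ⟨ht.1, ht.2.trans hx.2⟩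
      refine ((hφ ρ hρ t ht').sub (hΦ t)).congr_deriv ?_
      simp only [F, m, hψe t ht', hQe t ht', hpow ρ hρ]
      have := Real.rpow_pos_of_pos hρ (p - 1)
      field_simp
      ring
    have h1 := le_of_hasDerivAt_nonneg hx.1 hdiff fun _ _ => le_rfl
    have h2 := le_of_hasDerivAt_nonneg hx.1 (fun t ht => (hdiff t ht).neg) fun _ _ => by simp
    simp only [hφ0 ρ hρ, hΦ0, Pi.neg_apply] at h1 h2
    rw [hψe x hx]
    linarith
  let B : ℝ → ℝ := fun x => ρ * m x * powDeriv p S C (ψ x)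
  have hBc : Continuous B := by fun_prop
  let R : ℝ → ℝ := fun x => Real.exp (-∫ t in (0)..x, B t)
  have hR0 : ∀ x, 0 < R x := fun x => Real.exp_pos _
  have hR : ∀ x, HasDerivAt R (-(R x * (ρ * m x * powDeriv p S C (ψ x)))) x := fun x =>
    (hprim B hBc x).neg.exp.congr_deriv (by simp only [R, B, Pi.neg_apply]; ring)
  have hRc : Continuous R := continuous_iff_continuousAt.2 fun x => (hR x).continuousAt
  let G : ℝ → ℝ := fun x =>
    ρ * (m x * R x * (p * |S (ψ x)| ^ p - ψ x * powDeriv p S C (ψ x)))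
  have hGc : Continuous G := by fun_prop
  let J : ℝ → ℝ := fun x => ∫ t in (0)..x, G t
  have hJ : ∀ x, HasDerivAt J (G x) x := hprim G hGc
  have hJ0 : J 0 = 0 := intervalIntegral.integral_same
  let y : ℝ → ℝ := fun x => Φ x / ρ
  let u : ℝ → ℝ := fun x => -J x / (ρ ^ 2 * R x)
  have hu' : ∀ x, HasDerivAt u (-(m x / ρ) * (p * |S (ψ x)| ^ p - ψ x * powDeriv p S C (ψ x)) +
      ρ * m x * powDeriv p S C (ψ x) * u x) x := fun x => by
    have hne := (hR0 x).ne'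
    refine ((hJ x).neg.div ((hR x).const_mul (ρ ^ 2)) (by positivity)).congr_deriv ?_
    simp only [G, u, Pi.neg_apply]
    field_simp
    ring
  have hyc : Continuous y := continuous_iff_continuousAt.2 fun x =>
    ((hΦ x).div_const ρ).continuousAt
  have huc : Continuous u := continuous_iff_continuousAt.2 fun x => (hu' x).continuousAt
  have hnegp : ∀ r : ℝ, 0 < r → r ^ (-p) = (r ^ p)⁻¹ := fun r hr => Real.rpow_neg hr.le p
  have hmain := hasDerivAt_solution_param (x₀ := x₀) (ρ := ρ) (M := -q 0)
    (K := (ρ / 2) ^ (-p) * (p * (2 * ρ))) (Q := Q) (y := y) (u := u)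
    (g := fun r t => r ^ (-p) * |S (r * t)| ^ p)
    (D := fun k x => -p * (ρ + k) ^ (-p - 1) * |S ((ρ + k) * (y x + k * u x))| ^ p +
      (ρ + k) ^ (-p) * (powDeriv p S C ((ρ + k) * (y x + k * u x)) *
        ((y x + k * u x) + (ρ + k) * u x)))
    (θ := fun x r => φ x r / r) hx₀ hρ (neg_nonneg.2 (hq 0 h0mem)) (by positivity)
    (fun x _ => by rw [abs_of_nonneg (hQ0 x)]; exact hQM x)
    (fun r hr s t => by
      have hr' := abs_lt.1 hr
      have hr0 : 0 < r := by linarith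
      rw [← mul_sub, abs_mul, abs_of_pos (Real.rpow_pos_of_pos hr0 _), mul_assoc]
      have h1 : r ^ (-p) ≤ (ρ / 2) ^ (-p) :=
        Real.rpow_le_rpow_of_nonpos (by linarith) (by linarith) (by linarith)
      refine mul_le_mul h1 ((h.abs_rpow_sine_sub_le _ _).trans ?_) (abs_nonneg _) (by positivity)
      rw [← mul_sub, abs_mul, abs_of_pos hr0, mul_assoc]
      have h2 : r ≤ 2 * ρ := by linarith
      gcongr)
    (fun r hr => by simp [hφ0 r hr])
    (fun r hr x hx => by
      refine ((hφ r hr x hx).div_const r).congr_deriv ?_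
      have := Real.rpow_pos_of_pos hr (p - 1)
      rw [hQe x hx, mul_div_cancel₀ _ hr.ne', hnegp r hr, hpow r hr]
      field_simp
      ring)
    (fun x hx => by simp only [y, ← hψΦ x hx, hψe x hx])
    (fun x hx => by
      refine ((hΦ x).div_const ρ).congr_deriv ?_
      simp only [F, m, y]
      rw [mul_div_cancel₀ _ hρ.ne', hψΦ x hx, hnegp ρ hρ]
      field_simp)
    (fun x k hk => h.hasDerivAt_perturbation (by linarith [abs_lt.1 hk]) _ _)
    (fun x => by
      have hz : Continuous fun z : ℝ × ℝ => ρ + z.1 := by fun_prop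
      have h1 : ∀ e : ℝ, ContinuousAt (fun z : ℝ × ℝ => (ρ + z.1) ^ e) (0, x) := fun e =>
        hz.continuousAt.rpow_const (Or.inl (by simpa using hρ.ne'))
      have h2 : Continuous fun z : ℝ × ℝ => |S ((ρ + z.1) * (y z.2 + z.1 * u z.2))| ^ p :=
        hfc.comp (by fun_prop)
      have h3 : Continuous fun z : ℝ × ℝ => powDeriv p S C ((ρ + z.1) * (y z.2 + z.1 * u z.2)) *
          ((y z.2 + z.1 * u z.2) + (ρ + z.1) * u z.2) := by fun_prop
      exact ((continuousAt_const.mul (h1 _)).mul h2.continuousAt).add ((h1 _).mul h3.continuousAt))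
    (by simp [u, hJ0])
    (fun x hx => by
      refine (hu' x).congr_deriv ?_
      simp only [add_zero, zero_mul, m, y]
      rw [mul_div_cancel₀ _ hρ.ne', hψΦ x hx, Real.rpow_sub_one hρ.ne', hnegp ρ hρ]
      field_simp
      ring)
  have hdu : d = u x₀ := hd.unique hmain
  have hneg : ∀ x ∈ Ioc 0 x₀, q x ≠ 0 → d < 0 := fun x hx hqx => by
    have hx' : x ∈ Icc 0 x₀ := Ioc_subset_Icc_self hx
    have hmx : 0 < m x := div_pos (by
      rw [hQe x hx']; exact neg_pos.2 (lt_of_le_of_ne (hq x hx') hqx)) hρp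
    have hJpos := h.prufer_integral_pos hρ hma hm0 hm1 hψΦ hΦ0 hΦ hR0 hR hJ0 hJ hx hmx
    rw [hdu]
    exact div_neg_of_neg_of_pos (neg_neg_of_pos hJpos) (by have := hR0 x₀; positivity)
  refine ⟨?_, hneg⟩
  by_contra! hcon
  have hq0 : ∀ x ∈ Ioc 0 x₀, q x = 0 := fun x hx => by
    by_contra hne
    exact (hneg x hx hne).not_gt hcon
  have hJx : J 0 ≤ J x₀ := le_of_hasDerivAt_nonneg hx₀ (fun x _ => hJ x) fun x hx => by
    simp [G, m, hQe x (Ioo_subset_Icc_self hx), hq0 x (Ioo_subset_Ioc_self hx)]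
  rw [hdu] at hcon
  refine hcon.not_ge (div_nonpos_of_nonpos_of_nonneg (neg_nonpos.2 (hJ0 ▸ hJx)) ?_)
  have := hR0 x₀
  positivity

/-- ∂θ/∂ρ (x₀, ρ) ≤ 0 for ρ ≥ (-2q(0))^{1/p}, with equality forcing q ≡ 0 on (0,x₀]. -/
theorem theta_rho_derivative_nonpos
    (p x0 : ℝ) (hp : 1 < p) (hx0 : x0 ∈ Set.Ioc (0:ℝ) 1)
    (q : ℝ → ℝ) (hqc : ContinuousOn q (Set.Icc 0 x0))
    (hqneg : ∀ x ∈ Set.Icc (0:ℝ) x0, q x ≤ 0)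
    (hqmono : MonotoneOn q (Set.Icc 0 x0))
    (Sp Sp' : ℝ → ℝ)
    (hSpderiv : ∀ x : ℝ, HasDerivAt Sp (Sp' x) x)
    (hSpode : ∀ x : ℝ, HasDerivAt (fun t => |Sp' t| ^ (p - 2) * Sp' t)
      (-(p - 1) * (|Sp x| ^ (p - 2) * Sp x)) x)
    (hSp0 : Sp 0 = 0) (hSp1 : Sp' 0 = 1)
    (φ : ℝ → ℝ → ℝ)  -- φ x ρ : Prüfer angle
    (hφ0 : ∀ ρ : ℝ, 0 < ρ → φ 0 ρ = 0)
    (hφ : ∀ ρ : ℝ, 0 < ρ → ∀ x ∈ Set.Icc (0:ℝ) x0,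
      HasDerivAt (fun t => φ t ρ) (ρ - q x / ρ ^ (p - 1) * |Sp (φ x ρ)| ^ p) x)
    (θd : ℝ → ℝ)  -- θd ρ = ∂θ/∂ρ (x₀, ρ), where θ = φ/ρ
    (hθd : ∀ ρ : ℝ, 0 < ρ → HasDerivAt (fun r => φ x0 r / r) (θd ρ) ρ) :
    (∀ ρ : ℝ, 0 < ρ → (-2 * q 0) ^ (1 / p) ≤ ρ → θd ρ ≤ 0) ∧
    (∀ ρ : ℝ, 0 < ρ → (-2 * q 0) ^ (1 / p) ≤ ρ → θd ρ = 0 →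
      ∀ x ∈ Set.Ioc (0:ℝ) x0, q x = 0) := by
  have h : IsGenSine p Sp Sp' := ⟨hp, hSpderiv, hSpode, hSp0, hSp1⟩
  have hq0 := hqneg 0 (left_mem_Icc.2 hx0.1.le)
  have key : ∀ ρ : ℝ, 0 < ρ → (-2 * q 0) ^ (1 / p) ≤ ρ →
      θd ρ ≤ 0 ∧ ∀ x ∈ Ioc 0 x0, q x ≠ 0 → θd ρ < 0 := fun ρ hρ hle => by
    refine h.prufer_param_deriv hx0.1.le hρ hqc hqneg hqmono ?_ hφ0 hφ (hθd ρ hρ)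
    have h1 := Real.rpow_le_rpow (by apply Real.rpow_nonneg; linarith) hle (by linarith : 0 ≤ p)
    rw [one_div, Real.rpow_inv_rpow (by linarith) (by linarith)] at h1
    linarith
  refine ⟨fun ρ hρ hle => (key ρ hρ hle).1, fun ρ hρ hle hd x hx => ?_⟩
  by_contra hne
  exact ((key ρ hρ hle).2 x hx hne).ne hd
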